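/- arXiv:1809.05460 — 3 statements merged into one kernel-verified Lean document; each statement's English description precedes it below -/
import Mathlib

section
/- Let G₁ ⊆ UT(n₁,ℝ) and G₂ ⊆ UT(n₂,ℝ) be real unipotent groups and let f : G₁ → G₂ be a continuous group homomorphism. Then f is a polynomial map: for each pair of indices (i,j), there is a real polynomial p_{ij} in n₁² variables such that the (i,j) matrix entry of f(g) equals p_{ij} evaluated at the matrix entries of g, for every g ∈ G₁. -/
open Pointwise Filter

noncomputable section

/-- Square matrices of size `n` over `R`. -/
abbrev Mat (n : ℕ) (R : Type) : Type := Matrix (Fin n) (Fin n) R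

/-- The set `UT(n,ℝ)` of upper triangular matrices with `1`s on the diagonal. -/
def UTset (n : ℕ) : Set (Mat n ℝ) :=
  {A | (∀ i, A i i = 1) ∧ ∀ i j : Fin n, (j : ℕ) < (i : ℕ) → A i j = 0}

/-- The entries of a matrix, as a point of `ℝ^(n²)`. -/
def matEval {n : ℕ} (A : Mat n ℝ) : Fin n × Fin n → ℝ := fun ij => A ij.1 ij.2

/-- A real unipotent group: a subgroup of `UT(n,ℝ)` which is the common zero set in
`UT(n,ℝ)` of a family of real polynomials in the matrix entries. -/
def IsRealUnipotentGroup (n : ℕ) (G : Set (Mat n ℝ)) : Prop :=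
  (∃ S : Set (MvPolynomial (Fin n × Fin n) ℝ),
      G = {A | A ∈ UTset n ∧ ∀ p ∈ S, MvPolynomial.eval (matEval A) p = 0}) ∧
    (1 : Mat n ℝ) ∈ G ∧ (∀ a ∈ G, ∀ b ∈ G, a * b ∈ G) ∧ ∀ a ∈ G, a⁻¹ ∈ G

/-- A real algebraic subgroup of a real unipotent group `G`. -/
def IsRealAlgSubgroup (n : ℕ) (G H : Set (Mat n ℝ)) : Prop :=
  H ⊆ G ∧ IsRealUnipotentGroup n H

/-- `N` is a normal subgroup-set of `G`. -/
def IsNormalIn (n : ℕ) (G N : Set (Mat n ℝ)) : Prop :=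
  ∀ g ∈ G, ∀ x ∈ N, g * x * g⁻¹ ∈ N

/-- `Γ` is a lattice in `G`: a discrete subgroup which is cocompact, i.e. there is a
compact `K ⊆ G` with `K·Γ = G` (equivalently, `G/Γ` is compact). -/
def IsLatticeIn (n : ℕ) (G Γ : Set (Mat n ℝ)) : Prop :=
  Γ ⊆ G ∧ (1 : Mat n ℝ) ∈ Γ ∧ (∀ a ∈ Γ, ∀ b ∈ Γ, a * b ∈ Γ) ∧ (∀ a ∈ Γ, a⁻¹ ∈ Γ) ∧
    DiscreteTopology ↥Γ ∧
    ∃ K : Set (Mat n ℝ), K ⊆ G ∧ IsCompact K ∧ ∀ g ∈ G, ∃ k ∈ K, ∃ γ ∈ Γ, g = k * γ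

/-- `H` is `Γ`-rational: `Γ ∩ H` is a lattice in `H`. -/
def IsRationalFor (n : ℕ) (Γ H : Set (Mat n ℝ)) : Prop :=
  IsLatticeIn n H (Γ ∩ H)

/-- The hyperreal matrix represented by a sequence of real matrices. -/
def matOfSeq (n : ℕ) (u : ℕ → Mat n ℝ) : Mat n Hyperreal :=
  Matrix.of fun i j => Hyperreal.ofSeq fun k => u k i j

/-- The nonstandard extension `S^♯` of a set `S` of real matrices: hyperreal matrices
represented by sequences landing in `S` on a set of indices in the ultrafilter. -/
def matSharp (n : ℕ) (S : Set (Mat n ℝ)) : Set (Mat n Hyperreal) :=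
  {A | ∃ u : ℕ → Mat n ℝ, (∀ᶠ k in hyperfilter ℕ, u k ∈ S) ∧ A = matOfSeq n u}

/-- The canonical embedding of real matrices into hyperreal matrices. -/
def matCast {n : ℕ} (A : Mat n ℝ) : Mat n Hyperreal :=
  Matrix.of fun i j => (A i j : Hyperreal)

/-- `μ(G)`: elements of `G^♯` all of whose entries are infinitesimally close to the
corresponding entries of the identity matrix. -/
def muSet (n : ℕ) (G : Set (Mat n ℝ)) : Set (Mat n Hyperreal) :=
  {A | A ∈ matSharp n G ∧ ∀ i j, Hyperreal.Infinitesimal (A i j - (1 : Mat n Hyperreal) i j)}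

/-- The coset `gH` is near `α`, i.e. `α ∈ μ(G)·g·H^♯`. -/
def NearCoset (n : ℕ) (G : Set (Mat n ℝ)) (g : Mat n ℝ) (H : Set (Mat n ℝ))
    (α : Mat n Hyperreal) : Prop :=
  α ∈ muSet n G * ({matCast g} * matSharp n H)

/-- The set of standard parts of the finite elements of a set of hyperreal matrices. -/
def matStSet (n : ℕ) (A : Set (Mat n Hyperreal)) : Set (Mat n ℝ) :=
  {B | ∃ a ∈ A, ∀ i j, Hyperreal.IsSt (a i j) (B i j)}

/-- A polynomial map `ℝ^d → Mat n ℝ`. -/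
def IsPolyMapVec (d n : ℕ) (F : (Fin d → ℝ) → Mat n ℝ) : Prop :=
  ∃ P : Fin n → Fin n → MvPolynomial (Fin d) ℝ,
    ∀ x i j, F x i j = MvPolynomial.eval x (P i j)

/-- The inclusion `ℝ →+* ℝ*` as a ring homomorphism. -/
def realHyperRingHom : ℝ →+* Hyperreal where
  toFun r := (r : Hyperreal)
  map_one' := Hyperreal.coe_one
  map_mul' := Hyperreal.coe_mul
  map_zero' := Hyperreal.coe_zero
  map_add' := Hyperreal.coe_add

/-- A semialgebraic subset of matrix space: a finite union of sets defined by finitely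
many polynomial equations and finitely many strict polynomial inequalities. -/
def IsSemialgebraic (n : ℕ) (S : Set (Mat n ℝ)) : Prop :=
  ∃ (k : ℕ) (P Q : Fin k → Finset (MvPolynomial (Fin n × Fin n) ℝ)),
    S = ⋃ t : Fin k, {A | (∀ p ∈ P t, MvPolynomial.eval (matEval A) p = 0) ∧
      ∀ q ∈ Q t, 0 < MvPolynomial.eval (matEval A) q}


/-!
The logarithms of a closed group of unipotent elements that is stable under `u ↦ exp (t log u)` form
a linear subspace: `x + y` is the limit of `t⁻¹ log (exp (t x) exp (t y))` as `t → 0`. A real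
unipotent group is such a group, because a polynomial equation satisfied by `exp (k log u)` for all
natural numbers `k` is satisfied by `exp (t log u)` for all real `t`; and the graph of a continuous
homomorphism `f` is such a group, because continuous one-parameter groups are linear in logarithmic
coordinates. The linear subspace attached to the graph is itself the graph of a linear map `Φ`, so
`f = exp ∘ Φ ∘ log`, and `exp` and `log` are polynomials on nilpotent and unipotent matrices.
-/

section ExpLogSeries

open PowerSeries

variable {R : Type*} [CommRing R] [Algebra ℚ R]

theorem deriv_log_mul_one_add_X : d⁄dX R (log R) * (1 + X) = 1 := by
  ext (_ | n)
  · simp [deriv_log]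
  · simp [deriv_log, mul_add, coeff_succ_mul_X, coeff_one, pow_succ]

theorem log_subst_exp_sub_one : (log R).subst (exp R - 1) = X := by
  have hs : HasSubst (exp R - 1) := HasSubst.exp_sub_one
  have deriv_eq : d⁄dX R ((log R).subst (exp R - 1)) = 1 := by
    have h := congrArg (subst (exp R - 1)) (deriv_log_mul_one_add_X (R := R))
    rw [derivative_subst hs]
    rw [subst_mul hs, subst_add hs, subst_X hs, ← coe_substAlgHom hs, map_one] at h
    simpa [coe_substAlgHom hs, derivative_exp] using h
  have : IsAddTorsionFree R := IsAddTorsionFree.of_module_rat R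
  refine derivative.ext (by rw [deriv_eq, derivative_X]) ?_
  rw [constantCoeff_X]
  exact constantCoeff_subst_eq_zero (by simp [← constantCoeff_eq]) _ constantCoeff_log

theorem exp_subst_log : (exp R).subst (log R) = 1 + X := by
  have hs : HasSubst (exp R - 1) := .exp_sub_one
  have isUnit_coeff_one : IsUnit (coeff 1 (exp R - 1)) := by simp [coeff_exp, coeff_one]
  set expInv := (exp R - 1).substInvOfIsUnit isUnit_coeff_one
  have hs_inv : HasSubst expInv := .substInvOfIsUnit ..
  have exp_expInv : (exp R - 1).subst expInv = X :=
    subst_substInvOfIsUnit_right _ (by simp) isUnit_coeff_one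
  have log_eq_expInv : log R = expInv := by
    have h := congrArg (subst expInv) (log_subst_exp_sub_one (R := R))
    rwa [subst_comp_subst_apply hs hs_inv, exp_expInv, subst_X hs_inv, ← map_algebraMap_eq_subst_X,
      Algebra.algebraMap_self, PowerSeries.map_id] at h
  rw [log_eq_expInv, ← sub_eq_iff_eq_add', ← exp_expInv, ← coe_substAlgHom hs_inv, map_sub, map_one]

end ExpLogSeries

section NilEval

open PowerSeries

variable {R A B : Type*} [CommRing R] [Ring A] [Algebra R A] [Ring B] [Algebra R B] {N : ℕ}

theorem X_pow_dvd_sub_trunc (n : ℕ) (f : R⟦X⟧) : X ^ n ∣ f - (f.trunc n : R⟦X⟧) :=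
  ⟨_, sub_eq_of_eq_add (eq_X_pow_mul_shift_add_trunc n f)⟩

theorem X_pow_dvd_subst_sub_comp_trunc (n : ℕ) (f : R⟦X⟧) {g : R⟦X⟧} (hg : constantCoeff g = 0) :
    X ^ n ∣ f.subst g - (((f.trunc n).comp (g.trunc n) : Polynomial R) : R⟦X⟧) := by
  have hs : HasSubst g := .of_constantCoeff_zero' hg
  have outer : X ^ n ∣ f.subst g - Polynomial.aeval g (f.trunc n) := by
    obtain ⟨h, hh⟩ := X_pow_dvd_sub_trunc n f
    rw [← subst_coe hs, ← subst_sub hs, hh, subst_mul hs, subst_pow hs, subst_X hs]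
    exact (pow_dvd_pow_of_dvd (X_dvd_iff.2 hg) n).mul_right _
  have inner : X ^ n ∣ Polynomial.aeval g (f.trunc n) -
      Polynomial.aeval (g.trunc n : R⟦X⟧) (f.trunc n) := by
    simp only [Polynomial.aeval_def, Polynomial.eval₂_eq_eval_map]
    exact (X_pow_dvd_sub_trunc n g).trans (Polynomial.sub_dvd_eval_sub _ _ _)
  have comp_eq : (((f.trunc n).comp (g.trunc n) : Polynomial R) : R⟦X⟧) =
      Polynomial.aeval (g.trunc n : R⟦X⟧) (f.trunc n) := by
    have h := Polynomial.aeval_algHom_apply (Polynomial.coeToPowerSeries.algHom R) (g.trunc n)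
      (f.trunc n)
    simpa only [Polynomial.coeToPowerSeries.algHom_apply, Algebra.algebraMap_self,
      PowerSeries.map_id, id_eq, Polynomial.comp_eq_aeval] using h.symm
  simpa only [comp_eq, sub_add_sub_cancel] using dvd_add outer inner

theorem smul_pow_eq_zero {a : A} (ha : a ^ N = 0) (r : R) : (r • a) ^ N = 0 := by
  rw [smul_pow, ha, smul_zero]

/-- The value of the power series `f` at an element `a` with `a ^ N = 0`. The exponent `N` is part
of the data, so that `nilEval N f` is a polynomial function on the whole algebra. -/
def nilEval (N : ℕ) (f : R⟦X⟧) (a : A) : A :=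
  Polynomial.aeval a (f.trunc N)

theorem map_nilEval (φ : A →ₐ[R] B) (f : R⟦X⟧) (a : A) :
    φ (nilEval N f a) = nilEval N f (φ a) :=
  (Polynomial.aeval_algHom_apply φ a _).symm

theorem nilEval_eq_aeval {a : A} (ha : a ^ N = 0) {f : R⟦X⟧} {p : Polynomial R}
    (h : X ^ N ∣ f - (p : R⟦X⟧)) : nilEval N f a = Polynomial.aeval a p := by
  have hp : Polynomial.X ^ N ∣ f.trunc N - p := by
    rw [Polynomial.X_pow_dvd_iff]
    intro k hk
    simpa [coeff_trunc, hk] using X_pow_dvd_iff.1 h k hk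
  obtain ⟨q, hq⟩ := hp
  rw [nilEval, ← sub_eq_zero, ← map_sub, hq, map_mul, map_pow, Polynomial.aeval_X, ha, zero_mul]

theorem nilEval_coe {a : A} (ha : a ^ N = 0) (p : Polynomial R) :
    nilEval N (p : R⟦X⟧) a = Polynomial.aeval a p :=
  nilEval_eq_aeval ha (by simp)

theorem nilEval_of_le {a : A} (ha : a ^ N = 0) {M : ℕ} (hNM : N ≤ M) (f : R⟦X⟧) :
    nilEval N f a = nilEval M f a :=
  nilEval_eq_aeval ha ((pow_dvd_pow X hNM).trans (X_pow_dvd_sub_trunc M f))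

theorem nilEval_subst {a : A} (ha : a ^ N = 0) (f : R⟦X⟧) {g : R⟦X⟧}
    (hg : constantCoeff g = 0) : nilEval N (f.subst g) a = nilEval N f (nilEval N g a) := by
  rw [nilEval_eq_aeval ha (X_pow_dvd_subst_sub_comp_trunc N f hg), Polynomial.aeval_comp]
  rfl

theorem nilEval_sub_one {a : A} (ha : a ^ N = 0) (f : R⟦X⟧) :
    nilEval N (f - 1) a = nilEval N f a - 1 := by
  rw [nilEval_eq_aeval (p := f.trunc N - 1) ha (by simpa using X_pow_dvd_sub_trunc N f), map_sub,
    map_one, nilEval]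

theorem X_dvd_trunc {f : R⟦X⟧} (hf : constantCoeff f = 0) (n : ℕ) : Polynomial.X ∣ f.trunc n := by
  simp [Polynomial.X_dvd_iff, coeff_trunc, hf]

theorem nilEval_pow_eq_zero {a : A} (ha : a ^ N = 0) {f : R⟦X⟧} (hf : constantCoeff f = 0) :
    nilEval N f a ^ N = 0 := by
  obtain ⟨q, hq⟩ := pow_dvd_pow_of_dvd (X_dvd_trunc hf N) N
  rw [nilEval, ← map_pow, hq, map_mul, map_pow, Polynomial.aeval_X, ha, zero_mul]

theorem nilEval_zero {f : R⟦X⟧} (hf : constantCoeff f = 0) : nilEval N f (0 : A) = 0 := by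
  obtain ⟨q, hq⟩ := X_dvd_trunc hf N
  rw [nilEval, hq, map_mul, Polynomial.aeval_X, zero_mul]

theorem commute_nilEval {a b : A} (h : Commute a b) (f g : R⟦X⟧) :
    Commute (nilEval N f a) (nilEval N g b) := by
  simpa only [nilEval, Polynomial.aeval_eq_smeval] using Polynomial.smeval_commute R _ _ h

theorem continuous_nilEval [TopologicalSpace A] [IsTopologicalRing A] (f : R⟦X⟧) :
    Continuous (nilEval N f : A → A) :=
  (f.trunc N).continuous_aeval

end NilEval

section NilExp

open PowerSeries

variable {R A B : Type*} [CommRing R] [Algebra ℚ R] [Ring A] [Algebra R A] [Ring B] [Algebra R B]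
  {N : ℕ}

variable (R) in
/-- The exponential of an element `a` with `a ^ N = 0`. -/
def nilExp (N : ℕ) (a : A) : A :=
  nilEval N (exp R) a

variable (R) in
/-- The logarithm of an element `u` with `(u - 1) ^ N = 0`. -/
def nilLog (N : ℕ) (u : A) : A :=
  nilEval N (log R) (u - 1)

theorem map_nilExp (φ : A →ₐ[R] B) (a : A) : φ (nilExp R N a) = nilExp R N (φ a) :=
  map_nilEval φ _ a

theorem map_nilLog (φ : A →ₐ[R] B) (u : A) : φ (nilLog R N u) = nilLog R N (φ u) := by
  rw [nilLog, map_nilEval, map_sub, map_one, nilLog]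

theorem nilExp_prodMk (a : A) (b : B) : nilExp R N (a, b) = (nilExp R N a, nilExp R N b) :=
  Prod.ext (map_nilExp (AlgHom.fst R A B) (a, b)) (map_nilExp (AlgHom.snd R A B) (a, b))

theorem nilLog_prodMk (u : A) (v : B) : nilLog R N (u, v) = (nilLog R N u, nilLog R N v) :=
  Prod.ext (map_nilLog (AlgHom.fst R A B) (u, v)) (map_nilLog (AlgHom.snd R A B) (u, v))

theorem continuous_nilExp [TopologicalSpace A] [IsTopologicalRing A] :
    Continuous (nilExp R N : A → A) :=
  continuous_nilEval _

theorem continuous_nilLog [TopologicalSpace A] [IsTopologicalRing A] :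
    Continuous (nilLog R N : A → A) :=
  (continuous_nilEval _).comp (continuous_sub_right 1)

theorem nilLog_pow_eq_zero {u : A} (hu : (u - 1) ^ N = 0) : nilLog R N u ^ N = 0 :=
  nilEval_pow_eq_zero hu constantCoeff_log

theorem nilExp_nilLog {u : A} (hu : (u - 1) ^ N = 0) : nilExp R N (nilLog R N u) = u := by
  have h := nilEval_subst hu (exp R) constantCoeff_log
  rw [exp_subst_log, show (1 + X : R⟦X⟧) = ((1 + Polynomial.X : Polynomial R) : R⟦X⟧) by simp,
    nilEval_coe hu] at h
  simpa [nilExp, nilLog] using h.symm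

theorem nilLog_nilExp {a : A} (ha : a ^ N = 0) : nilLog R N (nilExp R N a) = a := by
  have h := nilEval_subst ha (log R) (g := exp R - 1) (by simp)
  rw [log_subst_exp_sub_one, nilEval_sub_one ha, ← Polynomial.coe_X, nilEval_coe ha,
    Polynomial.aeval_X] at h
  exact h.symm

theorem nilLog_one : nilLog R N (1 : A) = 0 := by
  rw [nilLog, sub_self, nilEval_zero constantCoeff_log]

theorem nilExp_zero (hN : N ≠ 0) : nilExp R N (0 : A) = 1 := by
  rw [← nilLog_one (R := R) (N := N), nilExp_nilLog (by rw [sub_self, zero_pow hN])]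

theorem nilExp_add {a b : A} (hab : Commute a b) (ha : a ^ N = 0) (hb : b ^ N = 0)
    (h : (a + b) ^ N = 0) : nilExp R N (a + b) = nilExp R N a * nilExp R N b := by
  let : Module ℚ A := Module.compHom A (algebraMap ℚ R)
  have nilExp_eq_exp {c : A} (hc : c ^ N = 0) : nilExp R N c = IsNilpotent.exp c := by
    simp only [IsNilpotent.exp_eq_sum hc, nilExp, nilEval, Polynomial.aeval_def,
      eval₂_trunc_eq_sum_range, coeff_exp, ← Algebra.smul_def, one_div]
    rfl
  rw [nilExp_eq_exp ha, nilExp_eq_exp hb, nilExp_eq_exp h]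
  exact IsNilpotent.exp_add_of_commute hab ⟨N, ha⟩ ⟨N, hb⟩

theorem nilExp_add_smul {a : A} (ha : a ^ N = 0) (r s : R) :
    nilExp R N ((r + s) • a) = nilExp R N (r • a) * nilExp R N (s • a) := by
  have h := smul_pow_eq_zero ha (r + s)
  rw [add_smul] at h ⊢
  exact nilExp_add (((Commute.refl a).smul_left r).smul_right s) (smul_pow_eq_zero ha r)
    (smul_pow_eq_zero ha s) h

theorem nilExp_natCast_smul (hN : N ≠ 0) {a : A} (ha : a ^ N = 0) (k : ℕ) :
    nilExp R N ((k : R) • a) = nilExp R N a ^ k := by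
  induction k with
  | zero => rw [Nat.cast_zero, zero_smul, nilExp_zero hN, pow_zero]
  | succ k ih => rw [Nat.cast_succ, nilExp_add_smul ha, ih, one_smul, pow_succ]

theorem nilLog_mul {u v : A} (huv : Commute u v) (hu : (u - 1) ^ N = 0) (hv : (v - 1) ^ N = 0)
    (h : (u * v - 1) ^ N = 0) : nilLog R N (u * v) = nilLog R N u + nilLog R N v := by
  set x := nilLog R N u
  set y := nilLog R N v
  have hx : x ^ N = 0 := nilLog_pow_eq_zero hu
  have hy : y ^ N = 0 := nilLog_pow_eq_zero hv
  have hxy : Commute x y :=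
    commute_nilEval ((huv.sub_left (.one_left _)).sub_right (.one_right _)) _ _
  -- `x + y` need not have order of nilpotency `N`, so the truncations are taken at `N + N`.
  have hle : N ≤ N + N := Nat.le_add_right N N
  have hadd : (x + y) ^ (N + N) = 0 :=
    hxy.add_pow_eq_zero_of_add_le_succ_of_pow_eq_zero hx hy (Nat.le_succ _)
  have exp_add : nilExp R (N + N) (x + y) = u * v := by
    rw [nilExp_add hxy (pow_eq_zero_of_le hle hx) (pow_eq_zero_of_le hle hy) hadd, nilExp, nilExp,
      ← nilEval_of_le hx hle, ← nilEval_of_le hy hle]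
    exact congrArg₂ _ (nilExp_nilLog hu) (nilExp_nilLog hv)
  rw [← nilLog_nilExp (R := R) hadd, exp_add]
  exact nilEval_of_le h hle _

end NilExp

section Tangent

open Polynomial Topology

variable {A : Type*} [Ring A] [Algebra ℝ A] [TopologicalSpace A] [IsTopologicalRing A]
  [ContinuousSMul ℝ A] {N : ℕ}

theorem tendsto_inv_smul_aeval {z : ℝ → A} {c : A}
    (hz : Tendsto (fun t => t⁻¹ • z t) (𝓝[≠] 0) (𝓝 c)) {p : ℝ[X]} (hp : p.coeff 0 = 0) :
    Tendsto (fun t => t⁻¹ • aeval (z t) p) (𝓝[≠] 0) (𝓝 (p.coeff 1 • c)) := by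
  have id_tendsto : Tendsto (fun t : ℝ => t) (𝓝[≠] 0) (𝓝 0) := nhdsWithin_le_nhds
  have z_tendsto : Tendsto z (𝓝[≠] 0) (𝓝 0) := by
    have h := id_tendsto.smul hz
    rw [zero_smul] at h
    refine h.congr' ?_
    filter_upwards [self_mem_nhdsWithin] with t ht
    exact smul_inv_smul₀ ht _
  have quotient_tendsto : Tendsto (fun t => aeval (z t) p.divX) (𝓝[≠] 0)
      (𝓝 (algebraMap ℝ A (p.coeff 1))) := by
    have h := (p.divX.continuous_aeval.tendsto (0 : A)).comp z_tendsto
    rwa [← coeff_zero_eq_aeval_zero', coeff_divX] at h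
  have factor (a : A) : aeval a p = aeval a p.divX * a := by
    conv_lhs => rw [← p.divX_mul_X_add, hp, C_0, add_zero, map_mul, aeval_X]
  simpa only [factor, mul_smul_comm, Algebra.smul_def (p.coeff 1)] using quotient_tendsto.mul hz

theorem tendsto_inv_smul_nilEval (hN : 1 < N) {z : ℝ → A} {c : A}
    (hz : Tendsto (fun t => t⁻¹ • z t) (𝓝[≠] 0) (𝓝 c)) {f : PowerSeries ℝ}
    (hf : PowerSeries.constantCoeff f = 0) :
    Tendsto (fun t => t⁻¹ • nilEval N f (z t)) (𝓝[≠] 0) (𝓝 (PowerSeries.coeff 1 f • c)) := by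
  simpa [nilEval, PowerSeries.coeff_trunc, hN] using
    tendsto_inv_smul_aeval hz (p := f.trunc N) (by simp [PowerSeries.coeff_trunc, hf])

theorem tendsto_inv_smul_nilExp_sub_one (hN : 1 < N) {x : A} (hx : x ^ N = 0) :
    Tendsto (fun t : ℝ => t⁻¹ • (nilExp ℝ N (t • x) - 1)) (𝓝[≠] 0) (𝓝 x) := by
  have line : Tendsto (fun t : ℝ => t⁻¹ • t • x) (𝓝[≠] 0) (𝓝 x) := by
    refine tendsto_const_nhds.congr' ?_
    filter_upwards [self_mem_nhdsWithin] with t ht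
    exact (inv_smul_smul₀ ht x).symm
  have h := tendsto_inv_smul_nilEval hN line (f := PowerSeries.exp ℝ - 1) (by simp)
  simp only [nilEval_sub_one (smul_pow_eq_zero hx _)] at h
  simpa [nilExp, PowerSeries.coeff_exp, PowerSeries.coeff_one] using h

theorem tendsto_inv_smul_nilLog_mul (hN : 1 < N) {x y : A} (hx : x ^ N = 0) (hy : y ^ N = 0) :
    Tendsto (fun t : ℝ => t⁻¹ • nilLog ℝ N (nilExp ℝ N (t • x) * nilExp ℝ N (t • y)))
      (𝓝[≠] 0) (𝓝 (x + y)) := by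
  have exp_tendsto : Tendsto (fun t : ℝ => nilExp ℝ N (t • y)) (𝓝[≠] 0) (𝓝 1) := by
    have h : Continuous fun t : ℝ => nilExp ℝ N (t • y) :=
      continuous_nilExp.comp (continuous_id.smul continuous_const)
    simpa [nilExp_zero (Nat.ne_zero_of_lt hN)] using (h.tendsto 0).mono_left nhdsWithin_le_nhds
  have product_tendsto : Tendsto
      (fun t : ℝ => t⁻¹ • (nilExp ℝ N (t • x) * nilExp ℝ N (t • y) - 1)) (𝓝[≠] 0)
      (𝓝 (x + y)) := by
    have h := ((tendsto_inv_smul_nilExp_sub_one hN hx).mul exp_tendsto).add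
      (tendsto_inv_smul_nilExp_sub_one hN hy)
    rw [mul_one] at h
    refine h.congr fun t => ?_
    rw [smul_mul_assoc, ← smul_add, sub_mul, one_mul, sub_add_sub_cancel]
  simpa [nilLog, PowerSeries.coeff_log] using
    tendsto_inv_smul_nilEval hN product_tendsto PowerSeries.constantCoeff_log

end Tangent

section UnipotentLieGroup

variable {A : Type*} [Ring A] [Algebra ℝ A] [TopologicalSpace A] {N : ℕ} {H : Submonoid A}

/-- A closed monoid of unipotent elements of a real topological algebra which contains the
one-parameter group `t ↦ exp (t log u)` through each of its elements `u`; it is a group, the inverse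
of `u` being the value at `t = -1`. -/
structure IsUnipotentLieGroup (N : ℕ) (H : Submonoid A) : Prop where
  isClosed : IsClosed (H : Set A)
  sub_one_pow_eq_zero : ∀ u ∈ H, (u - 1) ^ N = 0
  nilExp_smul_nilLog_mem : ∀ u ∈ H, ∀ t : ℝ, nilExp ℝ N (t • nilLog ℝ N u) ∈ H

namespace IsUnipotentLieGroup

variable (N H) in
/-- The set of logarithms of the elements of a unipotent Lie group `H`. -/
def logSet : Set A :=
  {x | x ^ N = 0 ∧ nilExp ℝ N x ∈ H}

theorem nilLog_mem_logSet (hH : IsUnipotentLieGroup N H) {u : A} (hu : u ∈ H) :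
    nilLog ℝ N u ∈ logSet N H := by
  have hu_nil := hH.sub_one_pow_eq_zero u hu
  exact ⟨nilLog_pow_eq_zero hu_nil, by rwa [nilExp_nilLog hu_nil]⟩

theorem smul_mem_logSet (hH : IsUnipotentLieGroup N H) (t : ℝ) {x : A} (hx : x ∈ logSet N H) :
    t • x ∈ logSet N H := by
  refine ⟨smul_pow_eq_zero hx.1 t, ?_⟩
  simpa only [nilLog_nilExp hx.1] using hH.nilExp_smul_nilLog_mem _ hx.2 t

variable [IsTopologicalRing A]

theorem isClosed_logSet [T1Space A] (hH : IsUnipotentLieGroup N H) : IsClosed (logSet N H) :=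
  (isClosed_singleton.preimage (continuous_pow N)).inter (hH.isClosed.preimage continuous_nilExp)

variable [ContinuousSMul ℝ A] [T1Space A]

theorem add_mem_logSet (hN : 1 < N) (hH : IsUnipotentLieGroup N H) {x y : A}
    (hx : x ∈ logSet N H) (hy : y ∈ logSet N H) : x + y ∈ logSet N H :=
  hH.isClosed_logSet.mem_of_tendsto (tendsto_inv_smul_nilLog_mul hN hx.1 hy.1) <|
    .of_forall fun t => hH.smul_mem_logSet _ <| hH.nilLog_mem_logSet <|
      H.mul_mem (hH.smul_mem_logSet t hx).2 (hH.smul_mem_logSet t hy).2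

/-- The Lie algebra of a unipotent Lie group: its logarithms, which form a linear subspace. -/
def lieAlgebra (hN : 1 < N) (hH : IsUnipotentLieGroup N H) : Submodule ℝ A where
  carrier := logSet N H
  zero_mem' := by
    simpa only [nilLog_one] using hH.nilLog_mem_logSet H.one_mem
  add_mem' := hH.add_mem_logSet hN
  smul_mem' t _ := hH.smul_mem_logSet t

end IsUnipotentLieGroup

end UnipotentLieGroup

section OneParameter

variable {B : Type*} [Ring B] [Algebra ℝ B] [TopologicalSpace B] [IsTopologicalRing B] {N : ℕ}

theorem nilLog_eq_smul [ContinuousSMul ℝ B] [T2Space B] {c : ℝ → B} (hc : Continuous c)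
    (hadd : ∀ s t, c (s + t) = c s * c t) (hnil : ∀ t, (c t - 1) ^ N = 0) (t : ℝ) :
    nilLog ℝ N (c t) = t • nilLog ℝ N (c 1) := by
  have hcomm (s t : ℝ) : Commute (c s) (c t) := by
    rw [Commute, SemiconjBy, ← hadd, ← hadd, add_comm]
  let logHom : ℝ →+ B := AddMonoidHom.mk' (fun s => nilLog ℝ N (c s)) fun s t => by
    rw [hadd, nilLog_mul (hcomm s t) (hnil s) (hnil t) (hadd s t ▸ hnil (s + t))]
  simpa [logHom] using map_real_smul logHom (continuous_nilLog.comp hc) t 1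

end OneParameter

section Graph

variable {A B : Type*} [Ring A] [Ring B] {G : Submonoid A} {f : G →* B}

/-- The graph of a homomorphism defined on a submonoid of `A`, as a submonoid of `A × B`. -/
def homGraph (f : G →* B) : Submonoid (A × B) :=
  MonoidHom.mrange (G.subtype.prod f)

theorem mk_mem_homGraph_iff {a : A} {b : B} :
    (a, b) ∈ homGraph f ↔ ∃ ha : a ∈ G, f ⟨a, ha⟩ = b := by
  simp [homGraph]

theorem snd_eq_zero_of_mem_logSet_homGraph [Algebra ℝ A] [Algebra ℝ B] {N : ℕ}
    (hN : N ≠ 0) {b : B}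
    (hb : ((0 : A), b) ∈ IsUnipotentLieGroup.logSet N (homGraph f)) : b = 0 := by
  obtain ⟨hb_nil, hb_exp⟩ := hb
  rw [nilExp_prodMk, nilExp_zero hN, mk_mem_homGraph_iff] at hb_exp
  obtain ⟨_, f_one⟩ := hb_exp
  have hb_pow : b ^ N = 0 := congrArg Prod.snd hb_nil
  rw [← nilLog_nilExp (R := ℝ) hb_pow, ← f_one]
  exact (congrArg (nilLog ℝ N) (map_one f)).trans nilLog_one

variable [TopologicalSpace A] [TopologicalSpace B] [T2Space B]

theorem isClosed_homGraph (hG : IsClosed (G : Set A)) (hf : Continuous f) :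
    IsClosed (homGraph f : Set (A × B)) := by
  have image_graph : (homGraph f : Set (A × B)) =
      Prod.map Subtype.val id '' {p : G × B | f p.1 = p.2} := by
    ext ⟨a, b⟩
    simp [mk_mem_homGraph_iff]
  rw [image_graph]
  exact (hG.isClosedEmbedding_subtypeVal.prodMap .id).isClosedMap _
    (isClosed_eq (hf.comp continuous_fst) continuous_snd)

variable [Algebra ℝ A] [IsTopologicalRing A] [ContinuousSMul ℝ A] [Algebra ℝ B]
  [IsTopologicalRing B] [ContinuousSMul ℝ B] {N : ℕ}

theorem map_nilExp_smul_nilLog (hG : IsUnipotentLieGroup N G) (hf : Continuous f)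
    (hnil : ∀ g, (f g - 1) ^ N = 0) (g : G) (t : ℝ) :
    f ⟨nilExp ℝ N (t • nilLog ℝ N (g : A)), hG.nilExp_smul_nilLog_mem g g.2 t⟩ =
      nilExp ℝ N (t • nilLog ℝ N (f g)) := by
  have hg := hG.sub_one_pow_eq_zero g g.2
  let γ (s : ℝ) : G := ⟨nilExp ℝ N (s • nilLog ℝ N (g : A)), hG.nilExp_smul_nilLog_mem g g.2 s⟩
  have γ_one : γ 1 = g := Subtype.ext <| by simp only [γ, one_smul, nilExp_nilLog hg]
  have γ_add (s t : ℝ) : γ (s + t) = γ s * γ t :=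
    Subtype.ext (nilExp_add_smul (nilLog_pow_eq_zero hg) s t)
  have γ_continuous : Continuous γ :=
    (continuous_nilExp.comp (continuous_id.smul continuous_const)).subtype_mk _
  have log_line := nilLog_eq_smul (hf.comp γ_continuous)
    (fun s t => by simp only [Function.comp_apply, γ_add, map_mul]) (fun s => hnil (γ s)) t
  simp only [Function.comp_apply, γ_one] at log_line
  rw [← log_line, nilExp_nilLog (hnil (γ t))]

theorem isUnipotentLieGroup_homGraph (hG : IsUnipotentLieGroup N G) (hf : Continuous f)
    (hnil : ∀ g, (f g - 1) ^ N = 0) : IsUnipotentLieGroup N (homGraph f) where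
  isClosed := isClosed_homGraph hG.isClosed hf
  sub_one_pow_eq_zero := by
    rintro ⟨a, b⟩ hab
    obtain ⟨ha, rfl⟩ := mk_mem_homGraph_iff.1 hab
    exact Prod.ext (hG.sub_one_pow_eq_zero a ha) (hnil _)
  nilExp_smul_nilLog_mem := by
    rintro ⟨a, b⟩ hab t
    obtain ⟨ha, rfl⟩ := mk_mem_homGraph_iff.1 hab
    rw [nilLog_prodMk, Prod.smul_mk, nilExp_prodMk]
    exact mk_mem_homGraph_iff.2 ⟨_, map_nilExp_smul_nilLog hG hf hnil ⟨a, ha⟩ t⟩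

theorem exists_linearMap_eq_nilExp [T1Space A] (hN : 1 < N) (hG : IsUnipotentLieGroup N G)
    (hf : Continuous f) (hnil : ∀ g, (f g - 1) ^ N = 0) :
    ∃ Φ : A →ₗ[ℝ] B, ∀ g : G, f g = nilExp ℝ N (Φ (nilLog ℝ N (g : A))) := by
  have hgraph := isUnipotentLieGroup_homGraph hG hf hnil
  set V : Submodule ℝ (A × B) := hgraph.lieAlgebra hN
  have hV : ∀ p ∈ V, p.1 = 0 → p.2 = 0 := by
    rintro ⟨_, b⟩ hb rfl
    exact snd_eq_zero_of_mem_logSet_homGraph (Nat.ne_zero_of_lt hN) hb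
  obtain ⟨Φ, hΦ⟩ := V.toLinearPMap.toFun.exists_extend
  refine ⟨Φ, fun g => ?_⟩
  have hg : (nilLog ℝ N (g : A), nilLog ℝ N (f g)) ∈ V := by
    rw [← nilLog_prodMk]
    exact hgraph.nilLog_mem_logSet (mk_mem_homGraph_iff.2 ⟨g.2, rfl⟩)
  rw [← V.toLinearPMap_graph_eq hV, LinearPMap.mem_graph_iff] at hg
  obtain ⟨x, hx, hLx⟩ := hg
  have hΦ_log : Φ (nilLog ℝ N (g : A)) = nilLog ℝ N (f g) :=
    (congrArg Φ hx).symm.trans ((LinearMap.congr_fun hΦ x).trans hLx)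
  rw [hΦ_log, nilExp_nilLog (hnil g)]

end Graph

section AlgebraicSet

variable {n : ℕ}

/-- The set of common zeros, among all `n × n` real matrices, of a family of polynomials in the
matrix entries. -/
def IsAlgebraicSet (Z : Set (Mat n ℝ)) : Prop :=
  ∃ S : Set (MvPolynomial (Fin n × Fin n) ℝ),
    Z = {A | ∀ p ∈ S, MvPolynomial.eval (matEval A) p = 0}

theorem IsAlgebraicSet.inter {Y Z : Set (Mat n ℝ)} (hY : IsAlgebraicSet Y)
    (hZ : IsAlgebraicSet Z) : IsAlgebraicSet (Y ∩ Z) := by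
  obtain ⟨S, rfl⟩ := hY
  obtain ⟨T, rfl⟩ := hZ
  exact ⟨S ∪ T, by ext A; simp [or_imp, forall_and]⟩

theorem IsAlgebraicSet.isClosed {Z : Set (Mat n ℝ)} (hZ : IsAlgebraicSet Z) : IsClosed Z := by
  obtain ⟨S, rfl⟩ := hZ
  have matEval_continuous : Continuous (matEval : Mat n ℝ → Fin n × Fin n → ℝ) :=
    continuous_pi fun ij => continuous_id.matrix_elem ij.1 ij.2
  simp only [Set.ofPred_forall]
  exact isClosed_biInter fun p _ =>
    isClosed_eq ((MvPolynomial.continuous_eval p).comp matEval_continuous) continuous_const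

theorem isAlgebraicSet_UTset : IsAlgebraicSet (UTset n) := by
  let S : Set (MvPolynomial (Fin n × Fin n) ℝ) :=
    {p | (∃ i, p = .X (i, i) - 1) ∨ ∃ i j, j < i ∧ p = .X (i, j)}
  refine ⟨S, ?_⟩
  ext A
  constructor
  · rintro ⟨hdiag, hlower⟩ p (⟨i, rfl⟩ | ⟨i, j, hij, rfl⟩)
    · simp [matEval, hdiag]
    · simp [matEval, hlower i j hij]
  · intro hA
    refine ⟨fun i => ?_, fun i j hij => ?_⟩
    · simpa [matEval, sub_eq_zero] using hA _ (.inl ⟨i, rfl⟩)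
    · simpa [matEval] using hA _ (.inr ⟨i, j, hij, rfl⟩)

theorem exists_polynomial_eval_nilExp_smul (N : ℕ) (x : Mat n ℝ)
    (p : MvPolynomial (Fin n × Fin n) ℝ) :
    ∃ q : Polynomial ℝ, ∀ t, q.eval t = MvPolynomial.eval (matEval (nilExp ℝ N (t • x))) p := by
  let M : Mat n (Polynomial ℝ) := nilExp ℝ N ((Polynomial.X : Polynomial ℝ) • x.map Polynomial.C)
  have hM (t : ℝ) : (Polynomial.aeval t).mapMatrix M = nilExp ℝ N (t • x) := by
    rw [map_nilExp]
    congr 1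
    ext i j
    simp [mul_comm t]
  refine ⟨MvPolynomial.aeval (fun ij => M ij.1 ij.2) p, fun t => ?_⟩
  rw [← hM, ← Polynomial.coe_aeval_eq_eval]
  exact MvPolynomial.comp_aeval_apply _ (Polynomial.aeval t) p

theorem IsAlgebraicSet.nilExp_smul_mem {Z : Set (Mat n ℝ)} (hZ : IsAlgebraicSet Z) {N : ℕ}
    {x : Mat n ℝ} (h : ∀ k : ℕ, nilExp ℝ N ((k : ℝ) • x) ∈ Z) (t : ℝ) :
    nilExp ℝ N (t • x) ∈ Z := by
  obtain ⟨S, rfl⟩ := hZ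
  intro p hp
  obtain ⟨q, hq⟩ := exists_polynomial_eval_nilExp_smul N x p
  have natCast_root (k : ℕ) : q.IsRoot k := (hq k).trans (h k p hp)
  have q_eq_zero : q = 0 := Polynomial.eq_zero_of_infinite_isRoot q <|
    (Set.infinite_range_of_injective (Nat.cast_injective (R := ℝ))).mono <|
      Set.range_subset_iff.2 natCast_root
  rw [← hq, q_eq_zero, Polynomial.eval_zero]

end AlgebraicSet

section RealUnipotentGroup

variable {n N : ℕ} {G : Set (Mat n ℝ)}

theorem sub_one_pow_eq_zero_of_mem_UTset {A : Mat n ℝ} (hA : A ∈ UTset n) (hN : n ≤ N) :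
    (A - 1) ^ N = 0 := by
  have charpoly_eq : A.charpoly = (Polynomial.X - 1) ^ n := by
    rw [Matrix.charpoly_of_isUpperTriangular A fun i j hij => hA.2 i j hij]
    simp [hA.1]
  have h := A.aeval_self_charpoly
  rw [charpoly_eq, map_pow, map_sub, map_one, Polynomial.aeval_X] at h
  exact pow_eq_zero_of_le hN h

namespace IsRealUnipotentGroup

theorem subset_UTset (hG : IsRealUnipotentGroup n G) : G ⊆ UTset n := by
  obtain ⟨⟨S, rfl⟩, -⟩ := hG
  exact fun A hA => hA.1

theorem isAlgebraicSet (hG : IsRealUnipotentGroup n G) : IsAlgebraicSet G := by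
  obtain ⟨⟨S, rfl⟩, -⟩ := hG
  exact isAlgebraicSet_UTset.inter ⟨S, rfl⟩

/-- A real unipotent group, as a submonoid of the matrix algebra. -/
def toSubmonoid (hG : IsRealUnipotentGroup n G) : Submonoid (Mat n ℝ) where
  carrier := G
  one_mem' := hG.2.1
  mul_mem' ha hb := hG.2.2.1 _ ha _ hb

theorem isUnipotentLieGroup (hG : IsRealUnipotentGroup n G) (hN : n ≤ N) (hN0 : N ≠ 0) :
    IsUnipotentLieGroup N hG.toSubmonoid where
  isClosed := hG.isAlgebraicSet.isClosed
  sub_one_pow_eq_zero u hu := sub_one_pow_eq_zero_of_mem_UTset (hG.subset_UTset hu) hN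
  nilExp_smul_nilLog_mem u hu := hG.isAlgebraicSet.nilExp_smul_mem fun k => by
    have hu_nil := sub_one_pow_eq_zero_of_mem_UTset (hG.subset_UTset hu) hN
    rw [nilExp_natCast_smul hN0 (nilLog_pow_eq_zero hu_nil), nilExp_nilLog hu_nil]
    exact hG.toSubmonoid.pow_mem hu k

end IsRealUnipotentGroup

end RealUnipotentGroup

section PolynomialMap

theorem exists_matrix_map_eq {K R l m n p : Type*} [CommSemiring K] [CommSemiring R] [Algebra K R]
    [Finite l] [Finite m] (Φ : Matrix l m K →ₗ[K] Matrix n p K) (M : Matrix l m R) :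
    ∃ M' : Matrix n p R, ∀ φ : R →ₐ[K] K, M'.map φ = Φ (M.map φ) := by
  classical
  cases nonempty_fintype l
  cases nonempty_fintype m
  refine ⟨.of fun i j => ∑ a, ∑ b, Φ (.single a b 1) i j • M a b, fun φ => ?_⟩
  have single_eq (a : l) (b : m) : Matrix.single a b (φ (M a b)) = φ (M a b) • .single a b 1 := by
    simp
  conv_rhs => rw [Matrix.matrix_eq_sum_single (M.map φ)]
  ext i j
  simp [Matrix.sum_apply, single_eq, mul_comm, -Matrix.smul_single]

theorem exists_mvPolynomial_matrix_eq_nilExp {n₁ n₂ : ℕ} (N : ℕ)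
    (Φ : Mat n₁ ℝ →ₗ[ℝ] Mat n₂ ℝ) :
    ∃ P : Mat n₂ (MvPolynomial (Fin n₁ × Fin n₁) ℝ), ∀ g,
      P.map (MvPolynomial.eval (matEval g)) = nilExp ℝ N (Φ (nilLog ℝ N g)) := by
  obtain ⟨M, hM⟩ := exists_matrix_map_eq Φ
    (nilLog ℝ N (Matrix.mvPolynomialX (Fin n₁) (Fin n₁) ℝ))
  refine ⟨nilExp ℝ N M, fun g => ?_⟩
  let φ : MvPolynomial (Fin n₁ × Fin n₁) ℝ →ₐ[ℝ] ℝ := MvPolynomial.aeval (matEval g)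
  calc (nilExp ℝ N M).map (MvPolynomial.eval (matEval g))
    _ = φ.mapMatrix (nilExp ℝ N M) := rfl
    _ = nilExp ℝ N (Φ (φ.mapMatrix (nilLog ℝ N (Matrix.mvPolynomialX _ _ ℝ)))) := by
      rw [map_nilExp]
      exact congrArg _ (hM φ)
    _ = nilExp ℝ N (Φ (nilLog ℝ N g)) := by
      rw [map_nilLog, show φ.mapMatrix (Matrix.mvPolynomialX _ _ ℝ) = g from
        Matrix.mvPolynomialX_mapMatrix_aeval ℝ g]

end PolynomialMap

theorem eq_one_of_isIdempotentElem_of_isNilpotent_sub_one {A : Type*} [Ring A] {u : A}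
    (hu : IsIdempotentElem u) (hnil : IsNilpotent (u - 1)) : u = 1 :=
  (IsIdempotentElem.iff_eq_one_of_isUnit (by simpa using hnil.isUnit_add_one)).1 hu

/-- a continuous homomorphism between real unipotent groups is polynomial. -/
theorem stmt12 {n₁ n₂ : ℕ} (G₁ : Set (Mat n₁ ℝ)) (G₂ : Set (Mat n₂ ℝ))
    (hG₁ : IsRealUnipotentGroup n₁ G₁) (hG₂ : IsRealUnipotentGroup n₂ G₂)
    (f : Mat n₁ ℝ → Mat n₂ ℝ) (hmaps : ∀ g ∈ G₁, f g ∈ G₂)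
    (hhom : ∀ a ∈ G₁, ∀ b ∈ G₁, f (a * b) = f a * f b)
    (hcont : ContinuousOn f G₁) :
    ∃ P : Fin n₂ → Fin n₂ → MvPolynomial (Fin n₁ × Fin n₁) ℝ,
      ∀ g ∈ G₁, ∀ i j, f g i j = MvPolynomial.eval (matEval g) (P i j) := by
  let N := n₁ + n₂ + 2
  have hnil (g) (hg : g ∈ G₁) : (f g - 1) ^ N = 0 :=
    sub_one_pow_eq_zero_of_mem_UTset (hG₂.subset_UTset (hmaps g hg)) (by omega)
  have hone : 1 ∈ G₁ := hG₁.toSubmonoid.one_mem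
  have hidem : IsIdempotentElem (f 1) := (hhom 1 hone 1 hone).symm.trans (congrArg f (mul_one 1))
  let F : hG₁.toSubmonoid →* Mat n₂ ℝ :=
    { toFun g := f g
      map_one' := eq_one_of_isIdempotentElem_of_isNilpotent_sub_one hidem ⟨N, hnil 1 hone⟩
      map_mul' a b := hhom a a.2 b b.2 }
  obtain ⟨Φ, hΦ⟩ := exists_linearMap_eq_nilExp (f := F) (N := N) (by omega)
    (hG₁.isUnipotentLieGroup (by omega) (by omega)) hcont.domRestrict fun g => hnil g g.2
  obtain ⟨P, hP⟩ := exists_mvPolynomial_matrix_eq_nilExp N Φ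
  refine ⟨P, fun g hg i j => ?_⟩
  calc f g i j = nilExp ℝ N (Φ (nilLog ℝ N g)) i j := congrFun₂ (hΦ ⟨g, hg⟩) i j
    _ = MvPolynomial.eval (matEval g) (P i j) := congrFun₂ (hP g).symm i j
end
end

section
/- Let G ⊆ UT(n,ℝ) and H ⊆ UT(n',ℝ) be real unipotent groups and let f : G → H be a surjective group homomorphism that is a polynomial map (each matrix entry of f(g) is a real polynomial in the matrix entries of g); let f^♯ : G^♯ → H^♯ denote its nonstandard extension (obtained by applying f along representing sequences, equivalently by evaluating the same polynomials over ℝ*). Let 𝒳 ⊆ G^♯ be an arbitrary subset and let Γ be a lattice in G such that f(Γ) is closed in H. Then f^♯(st(𝒳·Γ^♯)) = st(f^♯(𝒳)·f^♯(Γ^♯)), where for a subset 𝒜 of G^♯ (resp. H^♯), st(𝒜) denotes the set of standard parts st(a) of all elements a ∈ 𝒜 whose entries are all finite. -/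
open Pointwise Filter

noncomputable section

/-! Cocompactness lets us lift convergence along `f`. Suppose `f (x k)` tends to `y` along an
ultrafilter and write `x k = c k * γ k` with `c k` in a compact set and `γ k ∈ Γ`. By compactness
`c k` tends to some `c₀`, so `f (γ k) = f ((c k)⁻¹) * f (x k)` converges as well, and since `f(Γ)` is
closed the limit is `f γ₀` with `γ₀ ∈ Γ`. Correcting `x k` on the right by `(γ k)⁻¹ * γ₀ ∈ Γ` yields
`c k * γ₀`, which tends to `c₀ * γ₀`, a preimage of `y`. Standard parts of hyperreal matrices are
limits of representing sequences along the ultrafilter that defines `ℝ*`. -/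

open Topology

section LiftingLimits

variable {G N : Type*} [Group G] [TopologicalSpace G] [IsTopologicalGroup G]
  [Mul N] [TopologicalSpace N] [ContinuousMul N]

theorem exists_tendsto_mul_and_map_eq_of_tendsto_map [T2Space N] {φ : G →ₙ* N}
    (hφ : Continuous φ) {Γ : Subgroup G} {K : Set G} (hK : IsCompact K)
    (hKΓ : K * (Γ : Set G) = Set.univ) (hΓ : IsClosed (φ '' Γ)) {ι : Type*} (l : Ultrafilter ι)
    {x : ι → G} {y : N} (hx : Tendsto (fun k => φ (x k)) l (𝓝 y)) :
    ∃ (δ : ι → Γ) (g : G), Tendsto (fun k => x k * δ k) l (𝓝 g) ∧ φ g = y := by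
  have hdecomp (k : ι) : ∃ c ∈ K, ∃ γ ∈ (Γ : Set G), c * γ = x k :=
    Set.mem_mul.1 (hKΓ ▸ Set.mem_univ (x k))
  choose c hcK γ hγ hcγ using hdecomp
  obtain ⟨c₀, -, hc : Tendsto c l (𝓝 c₀)⟩ :=
    hK.ultrafilter_le_nhds' (l.map c)
      (mem_map.2 (Eventually.of_forall hcK))
  have hφγ : Tendsto (fun k => φ (γ k)) l (𝓝 (φ c₀⁻¹ * y)) := by
    refine (((hφ.tendsto _).comp hc.inv).mul hx).congr fun k => ?_
    rw [Function.comp_apply, ← map_mul, ← hcγ, inv_mul_cancel_left]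
  obtain ⟨γ₀, hγ₀, hφγ₀⟩ :=
    hΓ.mem_of_tendsto hφγ (Eventually.of_forall fun k => Set.mem_image_of_mem φ (hγ k))
  refine ⟨fun k => ⟨(γ k)⁻¹ * γ₀, Γ.mul_mem (Γ.inv_mem (hγ k)) hγ₀⟩, c₀ * γ₀, ?_, ?_⟩
  · refine (hc.mul_const γ₀).congr fun k => ?_
    rw [← hcγ, mul_assoc, mul_inv_cancel_left]
  · have hy : Tendsto (fun k => φ (x k)) l (𝓝 (φ c₀ * (φ c₀⁻¹ * y))) := by
      refine ((hx.const_mul _).const_mul _).congr fun k => ?_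
      rw [← map_mul, ← map_mul, mul_inv_cancel_left]
    rw [map_mul, hφγ₀, ← tendsto_nhds_unique hx hy]

end LiftingLimits

section HyperrealMatrices

variable {n n' : ℕ}

theorem matOfSeq_mul (u v : ℕ → Mat n ℝ) :
    matOfSeq n u * matOfSeq n v = matOfSeq n (u * v) := by
  ext i j
  let ofSeqHom : (ℕ → ℝ) →+* Hyperreal := Germ.coeRingHom (hyperfilter ℕ : Filter ℕ)
  have hsum : ∑ r, ofSeqHom (fun k => u k i r) * ofSeqHom (fun k => v k r j) =
      ofSeqHom fun k => (u k * v k) i j := by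
    simp_rw [← map_mul, ← map_sum]
    congr 1
    ext k
    simp only [Finset.sum_apply, Pi.mul_apply, Matrix.mul_apply]
  exact hsum

theorem matOfSeq_congr {u v : ℕ → Mat n ℝ} (h : u =ᶠ[hyperfilter ℕ] v) :
    matOfSeq n u = matOfSeq n v := by
  ext i j
  exact Germ.coe_eq.2 (h.mono fun k hk => congrFun (congrFun hk i) j)

theorem forall_isSt_matOfSeq_iff_tendsto {u : ℕ → Mat n ℝ} {B : Mat n ℝ} :
    (∀ i j, Hyperreal.IsSt (matOfSeq n u i j) (B i j)) ↔ Tendsto u (hyperfilter ℕ) (𝓝 B) :=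
  (forall₂_congr fun _ _ => Hyperreal.isSt_ofSeq_iff_tendsto).trans <|
    (forall_congr' fun _ => tendsto_pi_nhds.symm).trans tendsto_pi_nhds.symm

theorem matSharp_range {α : Type*} [Nonempty α] (e : α → Mat n ℝ) :
    matSharp n (Set.range e) = Set.range fun a : ℕ → α => matOfSeq n (e ∘ a) := by
  ext A
  constructor
  · rintro ⟨u, hu, rfl⟩
    exact ⟨Function.invFun e ∘ u, matOfSeq_congr (hu.mono fun k hk => Function.invFun_eq hk)⟩
  · rintro ⟨a, rfl⟩
    exact ⟨e ∘ a, Eventually.of_forall fun k => Set.mem_range_self (a k), rfl⟩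

variable {G : Type*} [Group G] {ρ : G →* Mat n ℝ} {Γ : Subgroup G} {𝒳 : Set (Mat n Hyperreal)}

theorem mem_matStSet_image_mul_image_iff {f : Mat n ℝ → Mat n' ℝ}
    (hmul : ∀ a b, f (ρ (a * b)) = f (ρ a) * f (ρ b)) {fs : Mat n Hyperreal → Mat n' Hyperreal}
    (hfs : ∀ u : ℕ → Mat n ℝ, fs (matOfSeq n u) = matOfSeq n' fun k => f (u k))
    (h𝒳 : 𝒳 ⊆ matSharp n (Set.range ρ)) {B : Mat n' ℝ} :
    B ∈ matStSet n' ((fs '' 𝒳) * (fs '' matSharp n (ρ '' Γ))) ↔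
      ∃ x : ℕ → G, matOfSeq n (ρ ∘ x) ∈ 𝒳 ∧ ∃ γ : ℕ → Γ,
        Tendsto (fun k => f (ρ (x k * γ k))) (hyperfilter ℕ) (𝓝 B) := by
  have hprod (x : ℕ → G) (γ : ℕ → Γ) :
      fs (matOfSeq n (ρ ∘ x)) * fs (matOfSeq n fun k => ρ (γ k)) =
        matOfSeq n' fun k => f (ρ (x k * γ k)) := by
    simp only [hfs, matOfSeq_mul, hmul]
    rfl
  rw [matSharp_range] at h𝒳
  rw [Set.image_eq_range ρ Γ, matSharp_range]
  constructor
  · rintro ⟨_, ⟨_, ⟨X, hX, rfl⟩, _, ⟨_, ⟨γ, rfl⟩, rfl⟩, rfl⟩, hst⟩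
    obtain ⟨x, rfl⟩ := h𝒳 hX
    exact ⟨x, hX, γ, forall_isSt_matOfSeq_iff_tendsto.1 (hprod x γ ▸ hst)⟩
  · rintro ⟨x, hx, γ, hlim⟩
    refine ⟨_, Set.mul_mem_mul (Set.mem_image_of_mem fs hx)
      (Set.mem_image_of_mem fs (Set.mem_range_self γ)), ?_⟩
    exact (hprod x γ).symm ▸ forall_isSt_matOfSeq_iff_tendsto.2 hlim

theorem mem_matStSet_mul_iff (h𝒳 : 𝒳 ⊆ matSharp n (Set.range ρ)) {B : Mat n ℝ} :
    B ∈ matStSet n (𝒳 * matSharp n (ρ '' Γ)) ↔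
      ∃ x : ℕ → G, matOfSeq n (ρ ∘ x) ∈ 𝒳 ∧ ∃ γ : ℕ → Γ,
        Tendsto (fun k => ρ (x k * γ k)) (hyperfilter ℕ) (𝓝 B) := by
  simpa only [Set.image_id'] using
    mem_matStSet_image_mul_image_iff (f := fun A => A) (fs := fun A => A) (map_mul ρ)
      (fun _ => rfl) h𝒳

end HyperrealMatrices

section LinearGroups

theorem exists_subgroup_image_eq {m R G : Type*} [Fintype m] [DecidableEq m] [CommRing R] [Group G]
    (ρ : G →* Matrix m m R) {S : Set (Matrix m m R)} (hS : S ⊆ Set.range ρ) (hone : 1 ∈ S)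
    (hmul : ∀ a ∈ S, ∀ b ∈ S, a * b ∈ S) (hinv : ∀ a ∈ S, a⁻¹ ∈ S) :
    ∃ Γ : Subgroup G, ρ '' Γ = S := by
  have hρinv (g : G) : (ρ g)⁻¹ = ρ g⁻¹ :=
    Matrix.inv_eq_left_inv (by rw [← map_mul, inv_mul_cancel, map_one])
  exact ⟨{ carrier := ρ ⁻¹' S
           one_mem' := by simpa only [Set.mem_preimage, map_one] using hone
           mul_mem' := fun ha hb => by
             simpa only [Set.mem_preimage, map_mul] using hmul _ ha _ hb
           inv_mem' := fun {g} hg => by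
             simpa only [Set.mem_preimage, hρinv] using hinv _ hg },
    Set.image_preimage_eq_of_subset hS⟩

variable {n n' : ℕ}

theorem continuous_eval_matEval (p : MvPolynomial (Fin n × Fin n) ℝ) :
    Continuous fun A : Mat n ℝ => MvPolynomial.eval (matEval A) p :=
  (MvPolynomial.continuous_eval p).comp <|
    continuous_pi fun ij => continuous_id.matrix_elem ij.1 ij.2

theorem continuousOn_of_forall_eq_eval {G : Set (Mat n ℝ)} {f : Mat n ℝ → Mat n' ℝ}
    (hf : ∃ P : Fin n' → Fin n' → MvPolynomial (Fin n × Fin n) ℝ,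
      ∀ g ∈ G, ∀ i j, f g i j = MvPolynomial.eval (matEval g) (P i j)) :
    ContinuousOn f G := by
  obtain ⟨P, hP⟩ := hf
  have hcont : Continuous fun A : Mat n ℝ =>
      Matrix.of fun i j => MvPolynomial.eval (matEval A) (P i j) :=
    continuous_matrix fun i j => continuous_eval_matEval (P i j)
  exact hcont.continuousOn.congr fun g hg => Matrix.ext (hP g hg)

theorem isClosed_UTset : IsClosed (UTset n) := by
  simp only [UTset, Set.ofPred_and, Set.ofPred_forall]
  exact (isClosed_iInter fun i => isClosed_eq (by fun_prop) continuous_const).inter <|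
    isClosed_iInter fun i => isClosed_iInter fun j => isClosed_iInter fun _ =>
      isClosed_eq (by fun_prop) continuous_const

theorem det_eq_one_of_mem_UTset {A : Mat n ℝ} (hA : A ∈ UTset n) : A.det = 1 := by
  rw [Matrix.det_of_isUpperTriangular fun i j hij => hA.2 i j hij]
  exact Finset.prod_eq_one fun i _ => hA.1 i

theorem IsRealUnipotentGroup.subset_UTset_s16 {G : Set (Mat n ℝ)} (hG : IsRealUnipotentGroup n G) :
    G ⊆ UTset n := by
  obtain ⟨⟨S, rfl⟩, -⟩ := hG
  exact fun _ hA => hA.1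

theorem IsRealUnipotentGroup.isClosed {G : Set (Mat n ℝ)} (hG : IsRealUnipotentGroup n G) :
    IsClosed G := by
  obtain ⟨⟨S, rfl⟩, -⟩ := hG
  simp only [Set.ofPred_and, Set.ofPred_forall]
  exact isClosed_UTset.inter <| isClosed_iInter fun p => isClosed_iInter fun _ =>
    isClosed_eq (continuous_eval_matEval p) continuous_const

theorem IsRealUnipotentGroup.exists_subgroup_isClosedEmbedding {G : Set (Mat n ℝ)}
    (hG : IsRealUnipotentGroup n G) :
    ∃ (A : Subgroup (Matrix.SpecialLinearGroup (Fin n) ℝ)) (ρ : A →* Mat n ℝ),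
      IsClosedEmbedding ρ ∧ Set.range ρ = G := by
  let coeHom : Matrix.SpecialLinearGroup (Fin n) ℝ →* Mat n ℝ :=
    { toFun := (↑), map_one' := rfl, map_mul' := fun _ _ => rfl }
  have hcoe : IsClosedEmbedding coeHom := Matrix.SpecialLinearGroup.isClosedEmbedding_val
  have hrange : G ⊆ Set.range coeHom := fun A hA =>
    ⟨⟨A, det_eq_one_of_mem_UTset (hG.subset_UTset_s16 hA)⟩, rfl⟩
  obtain ⟨A, hA⟩ := exists_subgroup_image_eq coeHom hrange hG.2.1 hG.2.2.1 hG.2.2.2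
  have hAclosed : IsClosed (A : Set (Matrix.SpecialLinearGroup (Fin n) ℝ)) :=
    hcoe.isClosed_iff_image_isClosed.2 (hA ▸ hG.isClosed)
  exact ⟨A, coeHom.comp A.subtype, hcoe.comp hAclosed.isClosedEmbedding_subtypeVal,
    (Set.image_eq_range coeHom A).symm.trans hA⟩

theorem IsLatticeIn.exists_subgroup_cocompact {G : Type*} [Group G] [TopologicalSpace G]
    {ρ : G →* Mat n ℝ} (hρ : IsClosedEmbedding ρ) {Γ : Set (Mat n ℝ)}
    (hΓ : IsLatticeIn n (Set.range ρ) Γ) :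
    ∃ Λ : Subgroup G, (∃ K : Set G, IsCompact K ∧ K * (Λ : Set G) = Set.univ) ∧ ρ '' Λ = Γ := by
  obtain ⟨hΓρ, hone, hmul, hinv, -, K, hKρ, hK, hKΓ⟩ := hΓ
  obtain ⟨Λ, rfl⟩ := exists_subgroup_image_eq ρ hΓρ hone hmul hinv
  refine ⟨Λ, ⟨ρ ⁻¹' K, hρ.isCompact_preimage hK, Set.eq_univ_of_forall fun g => ?_⟩, rfl⟩
  obtain ⟨k, hk, _, ⟨γ, hγ, rfl⟩, hg⟩ := hKΓ (ρ g) (Set.mem_range_self g)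
  obtain ⟨c, rfl⟩ := hKρ hk
  exact ⟨c, hk, γ, hγ, hρ.injective (by rw [hg, map_mul])⟩

end LinearGroups

theorem stmt16_general {n n' : ℕ} {G : Type*} [Group G] [TopologicalSpace G] [IsTopologicalGroup G]
    {ρ : G →* Mat n ℝ} (hρ : IsClosedEmbedding ρ) {f : Mat n ℝ → Mat n' ℝ}
    (hf : Continuous (f ∘ ρ)) (hmul : ∀ a b, f (ρ (a * b)) = f (ρ a) * f (ρ b))
    {fs : Mat n Hyperreal → Mat n' Hyperreal}
    (hfs : ∀ u : ℕ → Mat n ℝ, fs (matOfSeq n u) = matOfSeq n' fun k => f (u k))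
    {𝒳 : Set (Mat n Hyperreal)} (h𝒳 : 𝒳 ⊆ matSharp n (Set.range ρ))
    {Γ : Subgroup G} (hΓ : ∃ K : Set G, IsCompact K ∧ K * (Γ : Set G) = Set.univ)
    (hΓclosed : IsClosed (f '' (ρ '' Γ))) :
    f '' matStSet n (𝒳 * matSharp n (ρ '' Γ)) =
      matStSet n' ((fs '' 𝒳) * (fs '' matSharp n (ρ '' Γ))) := by
  ext y
  rw [mem_matStSet_image_mul_image_iff hmul hfs h𝒳]
  constructor
  · rintro ⟨B, hB, rfl⟩
    obtain ⟨x, hx, γ, hlim⟩ := (mem_matStSet_mul_iff h𝒳).1 hB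
    obtain ⟨g, rfl⟩ : B ∈ Set.range ρ :=
      hρ.isClosed_range.mem_of_tendsto hlim (Eventually.of_forall fun _ => Set.mem_range_self _)
    exact ⟨x, hx, γ, (hf.tendsto g).comp (hρ.tendsto_nhds_iff.2 hlim)⟩
  · rintro ⟨x, hx, γ, hlim⟩
    obtain ⟨K, hK, hKΓ⟩ := hΓ
    let φ : G →ₙ* Mat n' ℝ := ⟨f ∘ ρ, hmul⟩
    obtain ⟨δ, g, hg, hφg⟩ := exists_tendsto_mul_and_map_eq_of_tendsto_map (φ := φ) hf hK hKΓ
      (Set.image_comp f ρ Γ ▸ hΓclosed) (hyperfilter ℕ) hlim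
    refine ⟨ρ g, (mem_matStSet_mul_iff h𝒳).2 ⟨x, hx, γ * δ, ?_⟩, hφg⟩
    refine ((hρ.continuous.tendsto g).comp hg).congr fun k => ?_
    simp only [Function.comp_apply, Pi.mul_apply, Subgroup.coe_mul, mul_assoc]

/-- for a surjective polynomial homomorphism `f : G → H` with `f(Γ)`
closed, `f(st(𝒳·Γ^♯)) = st(f^♯(𝒳)·f^♯(Γ^♯))`. -/
theorem stmt16 {n n' : ℕ} (G : Set (Mat n ℝ)) (H : Set (Mat n' ℝ))
    (hG : IsRealUnipotentGroup n G) (hH : IsRealUnipotentGroup n' H)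
    (f : Mat n ℝ → Mat n' ℝ)
    (hpoly : ∃ P : Fin n' → Fin n' → MvPolynomial (Fin n × Fin n) ℝ,
      ∀ g ∈ G, ∀ i j, f g i j = MvPolynomial.eval (matEval g) (P i j))
    (hhom : ∀ a ∈ G, ∀ b ∈ G, f (a * b) = f a * f b)
    (hsurj : f '' G = H)
    (fs : Mat n Hyperreal → Mat n' Hyperreal)
    (hfs : ∀ u : ℕ → Mat n ℝ, fs (matOfSeq n u) = matOfSeq n' fun k => f (u k))
    (𝒳 : Set (Mat n Hyperreal)) (h𝒳 : 𝒳 ⊆ matSharp n G)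
    (Γ : Set (Mat n ℝ)) (hΓ : IsLatticeIn n G Γ) (hΓclosed : IsClosed (f '' Γ)) :
    f '' matStSet n (𝒳 * matSharp n Γ) =
      matStSet n' ((fs '' 𝒳) * (fs '' matSharp n Γ)) := by
  obtain ⟨A, ρ, hρ, rfl⟩ := hG.exists_subgroup_isClosedEmbedding
  obtain ⟨Λ, hΛ, rfl⟩ := hΓ.exists_subgroup_cocompact hρ
  exact stmt16_general hρ
    ((continuousOn_of_forall_eq_eval hpoly).comp_continuous hρ.continuous Set.mem_range_self)
    (fun a b => by rw [map_mul, hhom _ ⟨a, rfl⟩ _ ⟨b, rfl⟩]) hfs h𝒳 hΛ hΓclosed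
end
end

section
/- Let β = (β₁,…,β_d) ∈ (ℝ*)^d be a tuple of hyperreals such that β₁ > r for every real number r, and for every i with 1 ≤ i ≤ d−1 and every real polynomial q in i variables, β_{i+1} > q(β₁,…,β_i). Then for every nonconstant real polynomial q in d variables, q(β) is not finite, i.e. |q(β)| > r for every real number r. -/
open Pointwise Filter

noncomputable section

/-
Let `i` be the largest variable of a nonconstant `q` and write `q = X i * p + c`, where `c` only
involves variables below `i` and `p ≠ 0` has smaller total degree. Either `p` is a nonzero constant
or, by induction, `p(β)` is infinite; in both cases `|p(β)|` is at least some constant `ε > 0`.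
Since `β i` exceeds `ε⁻¹ * (r ± c(β))` for every constant `r`, the term `β i * p(β)` dominates
`r + |c(β)|`.
-/

section Division

open MvPolynomial

variable {R σ : Type*} [CommSemiring R]

theorem totalDegree_divMonomial_le (q : MvPolynomial σ R) (s : σ →₀ ℕ) :
    (q.divMonomial s).totalDegree ≤ q.totalDegree - s.degree := by
  refine Finset.sup_le fun m hm => ?_
  rw [support_divMonomial, Finset.mem_preimage] at hm
  have hdeg : (s + m).degree ≤ q.totalDegree := le_totalDegree hm
  rw [map_add] at hdeg
  change m.degree ≤ _
  omega

theorem vars_modMonomial_subset (q : MvPolynomial σ R) (s : σ →₀ ℕ) :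
    (q.modMonomial s).vars ⊆ q.vars := by
  intro j hj
  obtain ⟨m, hm, hjm⟩ := (mem_vars_iff_mem_support j).1 hj
  rw [mem_support_iff] at hm
  have hsm : ¬s ≤ m := fun h => hm (q.coeff_modMonomial_of_le h)
  rw [q.coeff_modMonomial_of_not_le hsm] at hm
  exact (mem_vars_iff_mem_support j).2 ⟨m, mem_support_iff.2 hm, hjm⟩

theorem notMem_vars_modMonomial_single (q : MvPolynomial σ R) (i : σ) :
    i ∉ (q.modMonomial (Finsupp.single i 1)).vars := by
  intro hi
  obtain ⟨m, hm, him⟩ := (mem_vars_iff_mem_support i).1 hi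
  have hle : Finsupp.single i 1 ≤ m :=
    Finsupp.single_le_iff.2 (Nat.one_le_iff_ne_zero.2 (Finsupp.mem_support_iff.1 him))
  exact mem_support_iff.1 hm (q.coeff_modMonomial_of_le hle)

theorem divMonomial_single_ne_zero {q : MvPolynomial σ R} {i : σ} (hi : i ∈ q.vars) :
    q.divMonomial (Finsupp.single i 1) ≠ 0 := by
  intro h
  have hmod := q.divMonomial_add_modMonomial_single i
  rw [h, mul_zero, zero_add] at hmod
  exact notMem_vars_modMonomial_single q i (hmod.symm ▸ hi)

theorem vars_nonempty_of_totalDegree_pos {q : MvPolynomial σ R} (hq : 0 < q.totalDegree) :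
    q.vars.Nonempty := by
  rw [Finset.nonempty_iff_ne_empty, Ne, vars_eq_empty_iff_eq_C, ← totalDegree_eq_zero_iff_eq_C]
  exact hq.ne'

theorem exists_X_mul_add_eq_of_totalDegree_pos [LinearOrder σ] {q : MvPolynomial σ R}
    (hq : 0 < q.totalDegree) :
    ∃ (i : σ) (p c : MvPolynomial σ R), p ≠ 0 ∧ p.totalDegree < q.totalDegree ∧
      c ∈ supported R (Set.Iio i) ∧ X i * p + c = q := by
  have hvars := vars_nonempty_of_totalDegree_pos hq
  let i := q.vars.max' hvars
  refine ⟨i, q.divMonomial (Finsupp.single i 1), q.modMonomial (Finsupp.single i 1),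
    divMonomial_single_ne_zero (q.vars.max'_mem hvars), ?_, ?_,
    q.divMonomial_add_modMonomial_single i⟩
  · have hdeg := totalDegree_divMonomial_le q (Finsupp.single i 1)
    rw [Finsupp.degree_single] at hdeg
    omega
  · refine mem_supported.2 fun j hj => lt_of_le_of_ne ?_ ?_
    · exact q.vars.le_max' j (vars_modMonomial_subset q _ hj)
    · rintro rfl
      exact notMem_vars_modMonomial_single q _ hj

end Division

theorem lt_abs_mul_add {K : Type*} [CommRing K] [LinearOrder K] [IsOrderedRing K]
    {x u v e r : K} (hx : 0 ≤ x) (he : e ≤ |u|) (h : r + |v| < e * x) : r < |x * u + v| := by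
  have hmul : e * x ≤ |x * u| := by
    rw [abs_mul, abs_of_nonneg hx, mul_comm]
    exact mul_le_mul_of_nonneg_left he hx
  have htriangle : |x * u| ≤ |x * u + v| + |v| := by
    simpa only [add_sub_cancel_right] using abs_sub (x * u + v) v
  exact lt_of_add_lt_add_right (h.trans_le (hmul.trans htriangle))

section FastGrowing

open MvPolynomial

/-- The growth condition on a tuple `β` over an ordered set of indices: each `β i` exceeds every
value at `β` of a polynomial in the variables strictly below `i`. Constants are such polynomials, so
a first entry, if there is one, exceeds every constant. -/
def IsFastGrowing {σ k K : Type*} [Preorder σ] [CommSemiring k] [CommSemiring K] [LT K]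
    (f : k →+* K) (β : σ → K) : Prop :=
  ∀ i, ∀ q ∈ supported k (Set.Iio i), eval₂ f β q < β i

theorem IsFastGrowing.pos {σ k K : Type*} [Preorder σ] [CommSemiring k] [CommSemiring K] [LT K]
    {f : k →+* K} {β : σ → K} (hβ : IsFastGrowing f β) (i : σ) : 0 < β i := by
  simpa only [eval₂_zero] using hβ i 0 (zero_mem _)

theorem isFastGrowing_of_fin {d : ℕ} {k K : Type*} [CommSemiring k] [CommSemiring K] [LT K]
    {f : k →+* K} {β : Fin d → K} (hd : 0 < d) (hzero : ∀ r, f r < β ⟨0, hd⟩)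
    (hpos : ∀ i : Fin d, 1 ≤ (i : ℕ) → ∀ q : MvPolynomial (Fin d) k,
      (∀ j ∈ q.vars, (j : ℕ) < (i : ℕ)) → eval₂ f β q < β i) :
    IsFastGrowing f β := by
  intro i q hq
  rw [mem_supported] at hq
  rcases Nat.eq_zero_or_pos (i : ℕ) with hi | hi
  · obtain rfl : i = ⟨0, hd⟩ := Fin.ext hi
    have hvars : q.vars = ∅ :=
      Finset.eq_empty_of_forall_notMem fun j hj => Nat.not_lt_zero j (hq hj)
    rw [vars_eq_empty_iff_eq_C.1 hvars, eval₂_C]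
    exact hzero _
  · exact hpos i hi q fun _ hj => hq hj

variable {σ k K : Type*} [Field k] [CommRing K] [LinearOrder K] [IsStrictOrderedRing K]
  {f : k →+* K} {β : σ → K}

theorem exists_pos_le_abs_eval₂ {p : MvPolynomial σ k} (hp : p ≠ 0)
    (hlarge : 0 < p.totalDegree → 1 ≤ |eval₂ f β p|) :
    ∃ ε : k, 0 < f ε ∧ f ε ≤ |eval₂ f β p| := by
  rcases Nat.eq_zero_or_pos p.totalDegree with hdeg | hdeg
  · obtain ⟨a, rfl⟩ : ∃ a, p = C a := ⟨_, totalDegree_eq_zero_iff_eq_C.1 hdeg⟩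
    have ha : 0 < |f a| := abs_pos.2 ((map_ne_zero f).2 fun h => hp (by rw [h, map_zero]))
    rw [eval₂_C]
    rcases abs_choice (f a) with habs | habs
    · exact ⟨a, habs ▸ ha, habs.ge⟩
    · rw [← map_neg] at habs
      exact ⟨-a, habs ▸ ha, habs.ge⟩
  · exact ⟨1, by rw [map_one]; exact one_pos, by rw [map_one]; exact hlarge hdeg⟩

variable [Preorder σ] {i : σ}

theorem IsFastGrowing.eval₂_lt_mul (hβ : IsFastGrowing f β) {ε : k} (hε : 0 < f ε)
    {c : MvPolynomial σ k} (hc : c ∈ supported k (Set.Iio i)) : eval₂ f β c < f ε * β i := by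
  have hε0 : ε ≠ 0 := (map_ne_zero f).1 hε.ne'
  have hlt : f ε⁻¹ * eval₂ f β c < β i := by
    rw [← eval₂_C f β, ← eval₂_mul]
    exact hβ i _ (mul_mem (Subalgebra.algebraMap_mem _ _) hc)
  calc eval₂ f β c = f ε * (f ε⁻¹ * eval₂ f β c) := by
        rw [← mul_assoc, ← map_mul, mul_inv_cancel₀ hε0, map_one, one_mul]
    _ < f ε * β i := mul_lt_mul_of_pos_left hlt hε

theorem IsFastGrowing.add_abs_eval₂_lt_mul (hβ : IsFastGrowing f β) {ε : k} (hε : 0 < f ε)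
    {c : MvPolynomial σ k} (hc : c ∈ supported k (Set.Iio i)) (r : k) :
    f r + |eval₂ f β c| < f ε * β i := by
  have hr : C r ∈ supported k (Set.Iio i) := Subalgebra.algebraMap_mem _ r
  have hadd := hβ.eval₂_lt_mul hε (add_mem hr hc)
  have hsub := hβ.eval₂_lt_mul hε (sub_mem hr hc)
  rw [eval₂_add, eval₂_C] at hadd
  rw [eval₂_sub, eval₂_C] at hsub
  rcases abs_choice (eval₂ f β c) with habs | habs <;> rw [habs] <;> linarith

theorem IsFastGrowing.lt_abs_eval₂_X_mul_add (hβ : IsFastGrowing f β) {p c : MvPolynomial σ k}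
    (hc : c ∈ supported k (Set.Iio i)) {ε : k} (hε : 0 < f ε)
    (hp : f ε ≤ |eval₂ f β p|) (r : k) : f r < |eval₂ f β (X i * p + c)| := by
  rw [eval₂_add, eval₂_mul, eval₂_X]
  exact lt_abs_mul_add (hβ.pos i).le hp (hβ.add_abs_eval₂_lt_mul hε hc r)

end FastGrowing

theorem stmt18_general {σ k K : Type*} [LinearOrder σ] [Field k] [CommRing K] [LinearOrder K]
    [IsStrictOrderedRing K] {f : k →+* K} {β : σ → K} (hβ : IsFastGrowing f β) :
    ∀ q : MvPolynomial σ k, 0 < q.totalDegree → ∀ r : k,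
      f r < |MvPolynomial.eval₂ f β q| := by
  intro q
  induction hn : q.totalDegree using Nat.strong_induction_on generalizing q with
  | h n ih =>
    subst hn
    intro hq
    obtain ⟨i, p, c, hp, hdeg, hc, rfl⟩ := exists_X_mul_add_eq_of_totalDegree_pos hq
    obtain ⟨ε, hε, hlow⟩ : ∃ ε : k, 0 < f ε ∧ f ε ≤ |MvPolynomial.eval₂ f β p| :=
      exists_pos_le_abs_eval₂ hp fun hpos => map_one f ▸ (ih _ hdeg p rfl hpos 1).le
    exact hβ.lt_abs_eval₂_X_mul_add hc hε hlow

/-- every nonconstant real polynomial is infinite at a sufficiently fast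
growing tuple of hyperreals. -/
theorem stmt18 {d : ℕ} (hd : 0 < d) (β : Fin d → Hyperreal)
    (h1 : ∀ r : ℝ, (r : Hyperreal) < β ⟨0, hd⟩)
    (h2 : ∀ i : Fin d, 1 ≤ (i : ℕ) → ∀ q : MvPolynomial (Fin d) ℝ,
      (∀ j ∈ q.vars, (j : ℕ) < (i : ℕ)) →
      MvPolynomial.eval₂ realHyperRingHom β q < β i) :
    ∀ q : MvPolynomial (Fin d) ℝ, 0 < q.totalDegree →
      ∀ r : ℝ, (r : Hyperreal) < |MvPolynomial.eval₂ realHyperRingHom β q| :=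
  stmt18_general (isFastGrowing_of_fin hd h1 h2)
end
end
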